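/- Fix real α, β > −1, j ∈ ℕ with j ≥ 1, γ ∈ ℝ, M > 0, and a sequence M_n ≥ 0 with lim_{n→∞} M_n n^γ = M. Suppose γ > 2(α+2j+1), and let s > 0 satisfy g_α(s) = 0 and g_α(t) ≠ 0 for all t ∈ (0, s) (i.e., s is the smallest positive zero of g_α, equivalently the first positive zero of the Bessel function J_α). Then the largest real zero y_{n,1} of Q_n satisfies lim_{n→∞} n·√(2(1 − y_{n,1})) = s. -/

import Mathlib

open Polynomial Filter

/-- The Jacobi polynomial `P_n^{(α,β)}` as a real polynomial. -/
noncomputable def jacobiP (α β : ℝ) (n : ℕ) : Polynomial ℝ :=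
  ∑ k ∈ Finset.range (n + 1),
    Polynomial.C (Real.Gamma (n + α + 1) / (Real.Gamma ((n : ℝ) - k + 1) * Real.Gamma (α + k + 1)) *
        (Real.Gamma (n + β + 1) / (Real.Gamma ((k : ℝ) + 1) * Real.Gamma ((n : ℝ) - k + β + 1)))) *
      (Polynomial.C (2⁻¹ : ℝ) * (Polynomial.X - 1)) ^ k *
      (Polynomial.C (2⁻¹ : ℝ) * (Polynomial.X + 1)) ^ (n - k)

/-- The squared Jacobi norm `‖P_n^{(α,β)}‖²`. -/
noncomputable def jacobiNormSq (α β : ℝ) (n : ℕ) : ℝ :=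
  ∫ x in (-1 : ℝ)..1, (jacobiP α β n).eval x ^ 2 * (1 - x) ^ α * (1 + x) ^ β

/-- The kernel `K_n^{(j,k)}(x,y)`. -/
noncomputable def kernK (α β : ℝ) (j k n : ℕ) (x y : ℝ) : ℝ :=
  ∑ i ∈ Finset.range (n + 1),
    (Polynomial.derivative^[j] (jacobiP α β i)).eval x *
      (Polynomial.derivative^[k] (jacobiP α β i)).eval y / jacobiNormSq α β i

/-- The kernel `K_n^{(j,0)}(1,·)` as a polynomial. -/
noncomputable def kernKPoly (α β : ℝ) (j n : ℕ) : Polynomial ℝ :=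
  ∑ i ∈ Finset.range (n + 1),
    Polynomial.C ((Polynomial.derivative^[j] (jacobiP α β i)).eval 1 / jacobiNormSq α β i) *
      jacobiP α β i

/-- The varying Sobolev inner product `(f,g)_{S,n}` with mass `m`. -/
noncomputable def sobInner (α β : ℝ) (j : ℕ) (m : ℝ) (f g : Polynomial ℝ) : ℝ :=
  (∫ x in (-1 : ℝ)..1, f.eval x * g.eval x * (1 - x) ^ α * (1 + x) ^ β) +
    m * (Polynomial.derivative^[j] f).eval 1 * (Polynomial.derivative^[j] g).eval 1

/-- The Jacobi–Sobolev orthogonal polynomial `Q_n`. -/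
noncomputable def sobQ (α β : ℝ) (j : ℕ) (Ms : ℕ → ℝ) (n : ℕ) : Polynomial ℝ :=
  jacobiP α β n -
    Polynomial.C (Ms n * (Polynomial.derivative^[j] (jacobiP α β n)).eval 1 /
        (1 + Ms n * kernK α β j j (n - 1) 1 1)) *
      kernKPoly α β j (n - 1)

/-- The entire function `g_ν(z) = ∑ (-1)^k (z/2)^{2k}/(k! Γ(k+ν+1))`, so that
`J_ν(x) = (x/2)^ν g_ν(x)`. -/
noncomputable def besselG (ν : ℝ) (z : ℂ) : ℂ :=
  ∑' k : ℕ, (-1) ^ k / ((Nat.factorial k : ℂ) * Complex.Gamma ((k : ℂ) + (ν : ℂ) + 1)) *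
    (z / 2) ^ (2 * k)

/-!
The Jacobi operator is triangular on powers of `x - 1`, so the Taylor coefficients of `P_n` at `1`
satisfy a two-term recursion; after division by `P_n(1)` they are nonnegative, increase with `n`,
and the substitution `x = 1 + 2 t / n²` turns the expansion into a dominated series converging to
`₀F₁(α + 1; t)`, which for `t = -z² / 4` is `Γ(α + 1) g_α(z)`.

Positivity of the Taylor coefficients also gives
`|Q_n(1 + w) - P_n(1 + w)| ≤ M_n (P_n^{(j)}(1) / P_n(1))² K_{n-1}(1, 1) P_n(1 + |w|)`.
The kernel polynomial stays comparable to `K_n(1, 1)` on an interval of length of order `n⁻²` next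
to `1` while its squared norm is `K_n(1, 1)`, whence `K_n(1, 1) = O(n^{2α + 2})`. The factor in
front of `P_n(1 + |w|)` is therefore `O(M_n n^{2(α + 2j + 1)})` and tends to `0`: `Q_n` inherits
the Mehler–Heine limit of `P_n` and has no zero in `[1, ∞)`. As `g_α` changes sign at `s`, the
largest zero of `Q_n` is located by a Hurwitz-type argument on the real line.
-/

/-! ### The Jacobi differential equation -/

section DifferentialEquation

variable {α β : ℝ}

/-- The Jacobi differential operator `p ↦ (x² - 1) p'' + ((α + β + 2) x + α - β) p'`, with the sign
for which its eigenvalues are nonnegative. -/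
noncomputable def jacobiOperator (α β : ℝ) : ℝ[X] →ₗ[ℝ] ℝ[X] :=
  LinearMap.mulLeft ℝ (X ^ 2 - 1) ∘ₗ derivative ∘ₗ derivative +
    LinearMap.mulLeft ℝ (C (α + β + 2) * X + C (α - β)) ∘ₗ derivative

/-- The eigenvalue of `jacobiOperator α β` belonging to `jacobiP α β n`. -/
def jacobiEigenvalue (α β : ℝ) (n : ℕ) : ℝ :=
  n * (n + α + β + 1)

/-- The coefficient of `((x - 1) / 2) ^ k * ((x + 1) / 2) ^ (n - k)` in `jacobiP α β n`. -/
noncomputable def jacobiCoeff (α β : ℝ) (n k : ℕ) : ℝ :=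
  Real.Gamma (n + α + 1) / (Real.Gamma ((n : ℝ) - k + 1) * Real.Gamma (α + k + 1)) *
    (Real.Gamma (n + β + 1) / (Real.Gamma ((k : ℝ) + 1) * Real.Gamma ((n : ℝ) - k + β + 1)))

theorem jacobiOperator_apply (α β : ℝ) (p : ℝ[X]) :
    jacobiOperator α β p = (X ^ 2 - 1) * derivative (derivative p) +
      (C (α + β + 2) * X + C (α - β)) * derivative p :=
  rfl

theorem jacobiP_eq_sum_smul (α β : ℝ) (n : ℕ) :
    jacobiP α β n = ∑ k ∈ Finset.range (n + 1), jacobiCoeff α β n k •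
      ((C 2⁻¹ * (X - 1)) ^ k * (C 2⁻¹ * (X + 1)) ^ (n - k)) := by
  simp only [jacobiP, jacobiCoeff, smul_eq_C_mul, mul_assoc]

theorem jacobiCoeff_self_succ (α β : ℝ) (n : ℕ) : jacobiCoeff α β n (n + 1) = 0 := by
  simp [jacobiCoeff, Real.Gamma_zero]

-- The case `k = n` relies on the junk value `Γ 0 = 0`, which makes the coefficient
-- `jacobiCoeff α β n (n + 1)` vanish as it should.
theorem jacobiCoeff_succ_mul (hα : -1 < α) (hβ : -1 < β) {n k : ℕ} (hk : k ≤ n) :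
    jacobiCoeff α β n (k + 1) * ((k + 1) * (k + 1 + α)) =
      jacobiCoeff α β n k * (((n - k : ℕ) : ℝ) * ((n - k : ℕ) + β)) := by
  obtain ⟨l, rfl⟩ := Nat.exists_eq_add_of_le hk
  rcases l with _ | l
  · simp [jacobiCoeff_self_succ]
  have : (0 : ℝ) ≤ k := k.cast_nonneg
  have : (0 : ℝ) ≤ l := l.cast_nonneg
  have hΓα := Real.Gamma_add_one (s := α + k + 1) (by linarith)
  have hΓβ := Real.Gamma_add_one (s := l + β + 1) (by linarith)
  have hΓk := Real.Gamma_add_one (s := k + 1) (by linarith)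
  have hΓl := Real.Gamma_add_one (s := l + 1) (by linarith)
  have hα0 := Real.Gamma_pos_of_pos (s := α + k + 1) (by linarith)
  have hβ0 := Real.Gamma_pos_of_pos (s := l + β + 1) (by linarith)
  have := Real.Gamma_pos_of_pos (s := k + 1) (by linarith)
  have := Real.Gamma_pos_of_pos (s := l + 1) (by linarith)
  have e₁ : ((k + (l + 1) : ℕ) : ℝ) - (k + 1 : ℕ) + 1 = l + 1 := by push_cast; ring
  have e₂ : ((k + (l + 1) : ℕ) : ℝ) - (k : ℕ) + 1 = l + 1 + 1 := by push_cast; ring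
  have e₃ : ((k + (l + 1) : ℕ) : ℝ) - (k + 1 : ℕ) + β + 1 = l + β + 1 := by push_cast; ring
  have e₄ : ((k + (l + 1) : ℕ) : ℝ) - (k : ℕ) + β + 1 = l + β + 1 + 1 := by push_cast; ring
  have e₅ : α + (k + 1 : ℕ) + 1 = α + k + 1 + 1 := by push_cast; ring
  rw [jacobiCoeff, jacobiCoeff, e₁, e₂, e₃, e₄, e₅, hΓα, hΓβ, hΓl, Nat.cast_succ k, hΓk,
    Nat.add_sub_cancel_left, Nat.cast_succ l]
  have : α + k + 1 ≠ 0 := by linarith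
  have : l + β + 1 ≠ 0 := by linarith
  field_simp
  ring

theorem mul_derivative_pow {a : ℝ[X]} {c : ℝ} (ha : derivative a = C c) (k : ℕ) :
    a * derivative (a ^ k) = C (k * c) * a ^ k := by
  rcases k with _ | k
  · simp
  · simp only [derivative_pow, ha, Nat.add_sub_cancel, C_mul]
    ring

theorem mul_derivative_derivative_pow {a : ℝ[X]} {c : ℝ} (ha : derivative a = C c) (k : ℕ) :
    a * derivative (derivative (a ^ k)) = C ((k - 1) * c) * derivative (a ^ k) := by
  rcases k with _ | k
  · simp
  · have h := mul_derivative_pow ha k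
    simp only [derivative_pow, derivative_mul, derivative_C, ha, Nat.add_sub_cancel] at h ⊢
    push_cast [C_mul, C_add, C_sub, C_1] at h ⊢
    linear_combination (C ((k : ℝ)) + 1) * C c * h

theorem C_inv_two_mul_two : (C 2⁻¹ : ℝ[X]) * 2 = 1 := by
  rw [← C_ofNat, ← C_mul]
  norm_num

theorem X_sq_sub_one_eq : (X : ℝ[X]) ^ 2 - 1 = 4 * (C 2⁻¹ * (X - 1) * (C 2⁻¹ * (X + 1))) := by
  linear_combination -(X ^ 2 - 1) * (C 2⁻¹ * 2 + 1) * C_inv_two_mul_two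

theorem C_mul_X_add_C_eq (α β : ℝ) :
    (C (α + β + 2) * X + C (α - β) : ℝ[X]) =
      2 * (C (α + 1) * (C 2⁻¹ * (X + 1)) + C (β + 1) * (C 2⁻¹ * (X - 1))) := by
  simp only [C_add, C_sub, C_ofNat, C_1]
  linear_combination -(C α * (X + 1) + C β * (X - 1) + 2 * X) * C_inv_two_mul_two

theorem C_mul_pow_pred_eq {a : ℝ[X]} (ha : derivative a = C 2⁻¹) (k : ℕ) :
    C (k : ℝ) * a ^ (k - 1) = 2 * derivative (a ^ k) := by
  rw [derivative_pow, ha]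
  linear_combination -(C (k : ℝ) * a ^ (k - 1)) * C_inv_two_mul_two

theorem jacobiOperator_pow_mul_pow (α β : ℝ) (k l : ℕ) :
    jacobiOperator α β ((C 2⁻¹ * (X - 1)) ^ k * (C 2⁻¹ * (X + 1)) ^ l) =
      jacobiEigenvalue α β (k + l) • ((C 2⁻¹ * (X - 1)) ^ k * (C 2⁻¹ * (X + 1)) ^ l) +
      (k * (k + α)) • ((C 2⁻¹ * (X - 1)) ^ (k - 1) * (C 2⁻¹ * (X + 1)) ^ (l + 1) -
        (C 2⁻¹ * (X - 1)) ^ k * (C 2⁻¹ * (X + 1)) ^ l) +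
      (l * (l + β)) • ((C 2⁻¹ * (X - 1)) ^ (k + 1) * (C 2⁻¹ * (X + 1)) ^ (l - 1) -
        (C 2⁻¹ * (X - 1)) ^ k * (C 2⁻¹ * (X + 1)) ^ l) := by
  set a : ℝ[X] := C 2⁻¹ * (X - 1) with ha
  set b : ℝ[X] := C 2⁻¹ * (X + 1) with hb
  have ha' : derivative a = C 2⁻¹ := by simp [ha]
  have hb' : derivative b = C 2⁻¹ := by simp [hb]
  have hPa := mul_derivative_pow ha' k
  have hQb := mul_derivative_pow hb' l
  have hPa' := mul_derivative_derivative_pow ha' k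
  have hQb' := mul_derivative_derivative_pow hb' l
  have hP := C_mul_pow_pred_eq ha' k
  have hQ := C_mul_pow_pred_eq hb' l
  rw [jacobiOperator_apply, X_sq_sub_one_eq, C_mul_X_add_C_eq, jacobiEigenvalue, ← ha, ← hb]
  simp only [derivative_mul, derivative_add, smul_eq_C_mul, C_mul, C_add, C_sub, C_1,
    Nat.cast_add, pow_succ] at hPa hQb hPa' hQb' ⊢
  generalize derivative (derivative (a ^ k)) = P'' at *
  generalize derivative (derivative (b ^ l)) = Q'' at *
  generalize derivative (a ^ k) = P' at *
  generalize derivative (b ^ l) = Q' at *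
  linear_combination 4 * b * b ^ l * hPa' + 4 * a * a ^ k * hQb' + 8 * b * Q' * hPa +
    8 * C (k : ℝ) * C 2⁻¹ * a ^ k * hQb + 2 * (C α + 1) * a ^ k * hQb +
    2 * (C β + 1) * b ^ l * hPa - (C (k : ℝ) + C α) * b * b ^ l * hP -
    (C (l : ℝ) + C β) * a * a ^ k * hQ + (2 * b * b ^ l * (C (k : ℝ) - 1) * P' +
    2 * a * a ^ k * (C (l : ℝ) - 1) * Q' + 2 * C (k : ℝ) * C (l : ℝ) * a ^ k * b ^ l *
    (2 * C 2⁻¹ + 1) + (C α + 1) * C (l : ℝ) * a ^ k * b ^ l +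
    (C β + 1) * C (k : ℝ) * a ^ k * b ^ l) * C_inv_two_mul_two

theorem jacobiOperator_jacobiP (hα : -1 < α) (hβ : -1 < β) (n : ℕ) :
    jacobiOperator α β (jacobiP α β n) = jacobiEigenvalue α β n • jacobiP α β n := by
  let F (k : ℕ) : ℝ[X] := (jacobiCoeff α β n k * (k * (k + α))) •
    ((C 2⁻¹ * (X - 1)) ^ k * (C 2⁻¹ * (X + 1)) ^ (n - k) -
      (C 2⁻¹ * (X - 1)) ^ (k - 1) * (C 2⁻¹ * (X + 1)) ^ (n + 1 - k))
  have hF : ∑ k ∈ Finset.range (n + 1), (F (k + 1) - F k) = 0 := by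
    rw [Finset.sum_range_sub]
    simp [F, jacobiCoeff_self_succ]
  rw [jacobiP_eq_sum_smul, map_sum, Finset.smul_sum, ← sub_eq_zero, ← Finset.sum_sub_distrib,
    ← hF]
  refine Finset.sum_congr rfl fun k hk ↦ ?_
  have hkn : k ≤ n := Nat.lt_succ_iff.1 (Finset.mem_range.1 hk)
  have hrec := jacobiCoeff_succ_mul hα hβ hkn
  simp only [F, map_smul, jacobiOperator_pow_mul_pow, Nat.add_sub_cancel, Nat.add_sub_cancel' hkn,
    Nat.cast_succ, hrec, ← Nat.sub_sub, Nat.sub_add_comm hkn]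
  module

theorem derivative_jacobiOperator (α β : ℝ) (p : ℝ[X]) :
    derivative (jacobiOperator α β p) =
      jacobiOperator (α + 1) (β + 1) (derivative p) + (α + β + 2) • derivative p := by
  simp only [jacobiOperator_apply, derivative_mul, derivative_add, derivative_sub, derivative_C,
    derivative_X, derivative_X_pow, derivative_one, derivative_ofNat, smul_eq_C_mul, C_add, C_sub,
    C_1, C_ofNat, Nat.cast_ofNat]
  ring

theorem iterate_derivative_jacobiOperator (α β : ℝ) (p : ℝ[X]) (k : ℕ) :
    derivative^[k] (jacobiOperator α β p) =
      jacobiOperator (α + k) (β + k) (derivative^[k] p) +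
        jacobiEigenvalue α β k • derivative^[k] p := by
  induction k with
  | zero => simp [jacobiEigenvalue]
  | succ k ih =>
    simp only [Function.iterate_succ_apply', ih, derivative_add, derivative_smul,
      derivative_jacobiOperator, Nat.cast_succ, jacobiEigenvalue, ← add_assoc]
    module

theorem eval_one_jacobiOperator (α β : ℝ) (p : ℝ[X]) :
    (jacobiOperator α β p).eval 1 = 2 * (α + 1) * (derivative p).eval 1 := by
  simp only [jacobiOperator_apply, eval_add, eval_sub, eval_mul, eval_pow, eval_X, eval_C, eval_one]
  ring

theorem eval_one_iterate_derivative_succ {p : ℝ[X]} {lam : ℝ} (hp : jacobiOperator α β p = lam • p)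
    (k : ℕ) :
    2 * (α + k + 1) * (derivative^[k + 1] p).eval 1 =
      (lam - jacobiEigenvalue α β k) * (derivative^[k] p).eval 1 := by
  have h := congrArg (eval 1) (iterate_derivative_jacobiOperator α β p k)
  rw [hp, iterate_derivative_smul, eval_smul, eval_add, eval_smul, eval_one_jacobiOperator,
    ← Function.iterate_succ_apply' derivative, smul_eq_mul, smul_eq_mul] at h
  linarith

end DifferentialEquation

/-! ### Taylor coefficients at the endpoint -/

section Taylor

open scoped Nat Topology

variable {α β : ℝ}

theorem hasSum_eval_add (p : ℝ[X]) (r w : ℝ) :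
    HasSum (fun k ↦ (derivative^[k] p).eval r / k ! * w ^ k) (p.eval (r + w)) := by
  have hcoeff (k : ℕ) : (taylor r p).coeff k = (derivative^[k] p).eval r / k ! := by
    rw [taylor_coeff, ← factorial_smul_hasseDeriv, eq_div_iff (by positivity)]
    simp [mul_comm]
  simp only [← hcoeff]
  rw [add_comm r, ← taylor_eval, eval_eq_sum_range]
  refine hasSum_sum_of_ne_finset_zero fun k hk ↦ ?_
  rw [coeff_eq_zero_of_natDegree_lt (by simpa [Nat.lt_succ_iff] using hk), zero_mul]

/-- The `k`-th derivative of `jacobiP α β n` at `1`, as a multiple of the value at `1`. -/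
noncomputable def jacobiTaylor (α β : ℝ) (n k : ℕ) : ℝ :=
  (∏ i ∈ Finset.range k, (jacobiEigenvalue α β n - jacobiEigenvalue α β i)) /
    (2 ^ k * (ascPochhammer ℝ k).eval (α + 1))

/-- The Jacobi polynomial normalized to equal `1` at the endpoint `1`, as a function of the
displacement from that endpoint. -/
noncomputable def jacobiNormalized (α β : ℝ) (n : ℕ) (w : ℝ) : ℝ :=
  (jacobiP α β n).eval (1 + w) / (jacobiP α β n).eval 1

@[simp]
theorem jacobiTaylor_zero (α β : ℝ) (n : ℕ) : jacobiTaylor α β n 0 = 1 := by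
  simp [jacobiTaylor]

theorem jacobiP_eval_one_pos (hα : -1 < α) (hβ : -1 < β) (n : ℕ) : 0 < (jacobiP α β n).eval 1 := by
  have h : (jacobiP α β n).eval 1 = jacobiCoeff α β n 0 := by
    rw [jacobiP_eq_sum_smul, eval_finsetSum, Finset.sum_range_succ']
    norm_num
  have : (0 : ℝ) ≤ n := n.cast_nonneg
  have hΓ {x : ℝ} (hx : 0 < x) : 0 < Real.Gamma x := Real.Gamma_pos_of_pos hx
  rw [h, jacobiCoeff, Nat.cast_zero]
  exact mul_pos
    (div_pos (hΓ (by linarith)) (mul_pos (hΓ (by linarith)) (hΓ (by linarith))))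
    (div_pos (hΓ (by linarith)) (mul_pos (hΓ (by linarith)) (hΓ (by linarith))))

theorem iterate_derivative_jacobiP_eval_one (hα : -1 < α) (hβ : -1 < β) (n k : ℕ) :
    (derivative^[k] (jacobiP α β n)).eval 1 = (jacobiP α β n).eval 1 * jacobiTaylor α β n k := by
  induction k with
  | zero => simp
  | succ k ih =>
    have h := eval_one_iterate_derivative_succ (jacobiOperator_jacobiP hα hβ n) k
    have hk : (0 : ℝ) < α + 1 + k := by linarith [k.cast_nonneg (α := ℝ)]
    have hp := ascPochhammer_pos k (α + 1) (by linarith)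
    rw [ih, jacobiTaylor] at h
    rw [jacobiTaylor, Finset.prod_range_succ, ascPochhammer_succ_eval]
    field_simp at h ⊢
    linear_combination h

theorem jacobiEigenvalue_strictMono (hα : -1 < α) (hβ : -1 < β) :
    StrictMono (jacobiEigenvalue α β) := by
  refine strictMono_nat_of_lt_succ fun n ↦ ?_
  have : (0 : ℝ) ≤ n := n.cast_nonneg
  simp only [jacobiEigenvalue, Nat.cast_succ]
  nlinarith

theorem jacobiEigenvalue_nonneg (hα : -1 < α) (hβ : -1 < β) (n : ℕ) :
    0 ≤ jacobiEigenvalue α β n := by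
  simpa [jacobiEigenvalue] using (jacobiEigenvalue_strictMono hα hβ).monotone n.zero_le

theorem jacobiTaylor_eq_zero {n k : ℕ} (h : n < k) : jacobiTaylor α β n k = 0 := by
  rw [jacobiTaylor, Finset.prod_eq_zero (Finset.mem_range.2 h) (sub_self _), zero_div]

theorem jacobiTaylor_nonneg (hα : -1 < α) (hβ : -1 < β) (n k : ℕ) : 0 ≤ jacobiTaylor α β n k := by
  rcases lt_or_ge n k with h | h
  · exact (jacobiTaylor_eq_zero h).ge
  have hp := ascPochhammer_pos k (α + 1) (by linarith)
  refine div_nonneg (Finset.prod_nonneg fun i hi ↦ sub_nonneg.2 ?_) (by positivity)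
  exact (jacobiEigenvalue_strictMono hα hβ).monotone ((Finset.mem_range.1 hi).le.trans h)

theorem jacobiTaylor_mono (hα : -1 < α) (hβ : -1 < β) (k : ℕ) :
    Monotone fun n ↦ jacobiTaylor α β n k := by
  intro m n hmn
  rcases lt_or_ge m k with h | h
  · exact (jacobiTaylor_eq_zero h).trans_le (jacobiTaylor_nonneg hα hβ n k)
  have hmono := (jacobiEigenvalue_strictMono hα hβ).monotone
  have hp := ascPochhammer_pos k (α + 1) (by linarith)
  refine div_le_div_of_nonneg_right (Finset.prod_le_prod (fun i hi ↦ sub_nonneg.2 ?_)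
    fun i _ ↦ sub_le_sub_right (hmono hmn) _) (by positivity)
  exact hmono ((Finset.mem_range.1 hi).le.trans h)

theorem jacobiTaylor_le (hα : -1 < α) (hβ : -1 < β) (n k : ℕ) :
    jacobiTaylor α β n k ≤
      jacobiEigenvalue α β n ^ k / (2 ^ k * (ascPochhammer ℝ k).eval (α + 1)) := by
  have h0 := jacobiEigenvalue_nonneg hα hβ
  have hp := ascPochhammer_pos k (α + 1) (by linarith)
  rcases lt_or_ge n k with h | h
  · exact (jacobiTaylor_eq_zero h).trans_le (div_nonneg (pow_nonneg (h0 n) k) (by positivity))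
  have hprod : ∏ i ∈ Finset.range k, (jacobiEigenvalue α β n - jacobiEigenvalue α β i) ≤
      ∏ _i ∈ Finset.range k, jacobiEigenvalue α β n := by
    refine Finset.prod_le_prod (fun i hi ↦ sub_nonneg.2 ?_) fun i _ ↦ sub_le_self _ (h0 i)
    exact (jacobiEigenvalue_strictMono hα hβ).monotone ((Finset.mem_range.1 hi).le.trans h)
  rw [Finset.prod_const, Finset.card_range] at hprod
  exact div_le_div_of_nonneg_right hprod (by positivity)

theorem tendsto_jacobiEigenvalue_sub_div_sq (α β c : ℝ) :
    Tendsto (fun n : ℕ ↦ (jacobiEigenvalue α β n - c) / n ^ 2) atTop (𝓝 1) := by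
  have hlin := tendsto_const_div_atTop_nhds_zero_nat (α + β + 1)
  have hsq := (tendsto_const_div_atTop_nhds_zero_nat c).mul tendsto_inv_atTop_nhds_zero_nat
  have hlim := (hlin.const_add 1).sub hsq
  rw [add_zero, mul_zero, sub_zero] at hlim
  refine hlim.congr' ((eventually_gt_atTop 0).mono fun n hn ↦ ?_)
  have : (n : ℝ) ≠ 0 := by positivity
  simp only [jacobiEigenvalue]
  field_simp
  ring

theorem tendsto_jacobiTaylor_div_pow (α β : ℝ) (k : ℕ) :
    Tendsto (fun n : ℕ ↦ jacobiTaylor α β n k / n ^ (2 * k)) atTop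
      (𝓝 (1 / (2 ^ k * (ascPochhammer ℝ k).eval (α + 1)))) := by
  have h := (tendsto_finsetProd (Finset.range k) fun i _ ↦
    tendsto_jacobiEigenvalue_sub_div_sq α β (jacobiEigenvalue α β i)).div_const
      (2 ^ k * (ascPochhammer ℝ k).eval (α + 1))
  rw [Finset.prod_const_one] at h
  refine h.congr fun n ↦ ?_
  rw [jacobiTaylor, Finset.prod_div_distrib, Finset.prod_const, Finset.card_range, ← pow_mul,
    div_right_comm]

theorem hasSum_jacobiNormalized (hα : -1 < α) (hβ : -1 < β) (n : ℕ) (w : ℝ) :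
    HasSum (fun k ↦ jacobiTaylor α β n k / k ! * w ^ k) (jacobiNormalized α β n w) := by
  refine ((hasSum_eval_add (jacobiP α β n) 1 w).div_const _).congr_fun fun k ↦ ?_
  have := (jacobiP_eval_one_pos hα hβ n).ne'
  rw [iterate_derivative_jacobiP_eval_one hα hβ]
  field_simp

theorem abs_jacobiTaylor_term_le (hα : -1 < α) (hβ : -1 < β) {m n : ℕ} (hmn : m ≤ n) {v w : ℝ}
    (hvw : |v| ≤ w) (k : ℕ) :
    |jacobiTaylor α β m k / k ! * v ^ k| ≤ jacobiTaylor α β n k / k ! * w ^ k := by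
  have hn := jacobiTaylor_nonneg hα hβ n k
  rw [abs_mul, abs_pow, abs_of_nonneg (div_nonneg (jacobiTaylor_nonneg hα hβ m k) (by positivity))]
  gcongr
  exact jacobiTaylor_mono hα hβ k hmn

theorem abs_jacobiNormalized_le (hα : -1 < α) (hβ : -1 < β) {m n : ℕ} (hmn : m ≤ n) {v w : ℝ}
    (hvw : |v| ≤ w) : |jacobiNormalized α β m v| ≤ jacobiNormalized α β n w :=
  (hasSum_jacobiNormalized hα hβ m v).norm_le_of_bounded (hasSum_jacobiNormalized hα hβ n w)
    (abs_jacobiTaylor_term_le hα hβ hmn hvw)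

theorem abs_jacobiNormalized_sub_one_le (hα : -1 < α) (hβ : -1 < β) {m n : ℕ} (hmn : m ≤ n)
    {v w : ℝ} (hvw : |v| ≤ w) :
    |jacobiNormalized α β m v - 1| ≤ jacobiNormalized α β n w - 1 := by
  have htail (i : ℕ) (u : ℝ) : HasSum (fun k ↦ jacobiTaylor α β i (k + 1) / (k + 1)! * u ^ (k + 1))
      (jacobiNormalized α β i u - 1) := by
    simpa using (hasSum_nat_add_iff' 1).2 (hasSum_jacobiNormalized (β := β) hα hβ i u)
  exact (htail m v).norm_le_of_bounded (htail n w) fun k ↦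
    abs_jacobiTaylor_term_le hα hβ hmn hvw (k + 1)

end Taylor

/-! ### The confluent hypergeometric limit function -/

section HypergeometricLimit

open Set
open scoped Nat Topology

variable {c : ℝ}

/-- The confluent hypergeometric limit function `₀F₁(c; x)`. It carries the zeros of the Bessel
function, since `J_ν(x) = (x / 2) ^ ν / Γ(ν + 1) * ₀F₁(ν + 1; -x² / 4)`. -/
noncomputable def hypergeometricLimit (c x : ℝ) : ℝ :=
  ∑' k : ℕ, x ^ k / (k ! * (ascPochhammer ℝ k).eval c)

theorem ascPochhammer_succ_eval_left (k : ℕ) (c : ℝ) :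
    (ascPochhammer ℝ (k + 1)).eval c = c * (ascPochhammer ℝ k).eval (c + 1) := by
  simp [ascPochhammer_succ_left]

theorem pow_le_ascPochhammer_eval (hc : 0 < c) (k : ℕ) : c ^ k ≤ (ascPochhammer ℝ k).eval c := by
  induction k with
  | zero => simp
  | succ k ih =>
    rw [pow_succ, ascPochhammer_succ_eval]
    gcongr
    · exact (ascPochhammer_pos k c hc).le
    · linarith [k.cast_nonneg (α := ℝ)]

theorem Gamma_add_natCast (hc : 0 < c) (k : ℕ) :
    Real.Gamma (c + k) = Real.Gamma c * (ascPochhammer ℝ k).eval c := by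
  induction k with
  | zero => simp
  | succ k ih =>
    have : c + k ≠ 0 := by positivity
    rw [Nat.cast_succ, ← add_assoc, Real.Gamma_add_one this, ih, ascPochhammer_succ_eval]
    ring

theorem summable_hypergeometricLimit (hc : 0 < c) (x : ℝ) :
    Summable fun k : ℕ ↦ x ^ k / (k ! * (ascPochhammer ℝ k).eval c) := by
  refine (Real.summable_pow_div_factorial (|x| / c)).of_norm_bounded fun k ↦ ?_
  have hp := ascPochhammer_pos k c hc
  rw [Real.norm_eq_abs, abs_div, abs_pow, abs_of_pos (a := (k ! : ℝ) * _) (by positivity), div_pow,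
    div_div, mul_comm (c ^ k)]
  gcongr
  exact pow_le_ascPochhammer_eval hc k

theorem hypergeometricLimit_zero (c : ℝ) : hypergeometricLimit c 0 = 1 := by
  rw [hypergeometricLimit, tsum_eq_single 0 fun k hk ↦ by simp [hk]]
  simp

theorem hasDerivAt_hypergeometricLimit (hc : 0 < c) (x : ℝ) :
    HasDerivAt (hypergeometricLimit c) (hypergeometricLimit (c + 1) x / c) x := by
  let g' (k : ℕ) (y : ℝ) : ℝ := k * y ^ (k - 1) / (k ! * (ascPochhammer ℝ k).eval c)
  have hg'_succ (y : ℝ) (k : ℕ) :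
      g' (k + 1) y = y ^ k / (k ! * (ascPochhammer ℝ k).eval (c + 1)) / c := by
    have hp := ascPochhammer_pos k (c + 1) (by linarith)
    simp only [g', ascPochhammer_succ_eval_left, Nat.factorial_succ, Nat.add_sub_cancel]
    push_cast
    field_simp
  have hsum (y : ℝ) : Summable fun k ↦ g' k y := by
    refine (summable_nat_add_iff 1).1 ?_
    simpa only [hg'_succ] using (summable_hypergeometricLimit (by linarith) y).div_const c
  have htsum : ∑' k, g' k x = hypergeometricLimit (c + 1) x / c := by
    rw [(hsum x).tsum_eq_zero_add, hypergeometricLimit, ← tsum_div_const]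
    simp [hg'_succ, g']
  rw [← htsum]
  refine hasDerivAt_tsum_of_isPreconnected (hsum (|x| + 1)) Metric.isOpen_ball
    (convex_ball (0 : ℝ) (|x| + 1)).isPreconnected
    (fun k y _ ↦ (hasDerivAt_pow k y).div_const _) (fun k y hy ↦ ?_)
    (Metric.mem_ball_self (by positivity)) (summable_hypergeometricLimit hc 0) (by simp)
  have hp := ascPochhammer_pos k c hc
  rw [mem_ball_zero_iff, Real.norm_eq_abs] at hy
  simp only [g', Real.norm_eq_abs, abs_div, abs_mul, abs_pow, Nat.abs_cast, abs_of_pos hp]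
  gcongr

theorem continuous_hypergeometricLimit (hc : 0 < c) : Continuous (hypergeometricLimit c) :=
  continuous_iff_continuousAt.2 fun x ↦ (hasDerivAt_hypergeometricLimit hc x).continuousAt

theorem hypergeometricLimit_contiguous (hc : 0 < c) (x : ℝ) :
    hypergeometricLimit c x =
      hypergeometricLimit (c + 1) x + x / (c * (c + 1)) * hypergeometricLimit (c + 2) x := by
  have h₀ := summable_hypergeometricLimit hc x
  have h₁ := summable_hypergeometricLimit (c := c + 1) (by linarith) x
  rw [hypergeometricLimit, hypergeometricLimit, hypergeometricLimit, h₀.tsum_eq_zero_add,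
    h₁.tsum_eq_zero_add, ← tsum_mul_left, add_assoc, ← Summable.tsum_add
      ((summable_nat_add_iff 1).2 h₁)
      ((summable_hypergeometricLimit (c := c + 2) (by linarith) x).mul_left _)]
  congr 1
  · simp
  refine tsum_congr fun k ↦ ?_
  have hp := ascPochhammer_pos k (c + 1) (by linarith)
  have hshift : (ascPochhammer ℝ k).eval (c + 2) =
      (ascPochhammer ℝ k).eval (c + 1) * (c + 1 + k) / (c + 1) := by
    rw [eq_div_iff (by linarith), ← ascPochhammer_succ_eval, ascPochhammer_succ_eval_left,
      add_assoc, one_add_one_eq_two, mul_comm]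
  have : 0 < c + 1 + k := by positivity
  rw [ascPochhammer_succ_eval_left, ascPochhammer_succ_eval, hshift, Nat.factorial_succ]
  push_cast
  field_simp
  ring

theorem hasDerivAt_rpow_mul_hypergeometricLimit (hc : 0 < c) {t : ℝ} (ht : 0 < t) :
    HasDerivAt (fun u ↦ u ^ c * hypergeometricLimit (c + 1) (-u))
      (c * t ^ (c - 1) * hypergeometricLimit c (-t)) t := by
  have hF := (hasDerivAt_hypergeometricLimit (c := c + 1) (by linarith) (-t)).comp t
    (hasDerivAt_neg t)
  refine ((Real.hasDerivAt_rpow_const (Or.inl ht.ne')).mul hF).congr_deriv ?_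
  rw [hypergeometricLimit_contiguous hc, add_assoc c 1 1, one_add_one_eq_two,
    Real.rpow_sub_one ht.ne']
  simp only [Function.comp_apply]
  field_simp

theorem hypergeometricLimit_succ_pos (hc : 0 < c) {t : ℝ} (ht : 0 < t)
    (hpos : ∀ u ∈ Ioo 0 t, 0 < hypergeometricLimit c (-u)) :
    0 < hypergeometricLimit (c + 1) (-t) := by
  have hmono : StrictMonoOn (fun u ↦ u ^ c * hypergeometricLimit (c + 1) (-u)) (Icc 0 t) := by
    refine strictMonoOn_of_deriv_pos (convex_Icc 0 t) ?_ fun u hu ↦ ?_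
    · exact ((Real.continuous_rpow_const hc.le).mul ((continuous_hypergeometricLimit
        (by linarith)).comp continuous_neg)).continuousOn
    · rw [interior_Icc] at hu
      rw [(hasDerivAt_rpow_mul_hypergeometricLimit hc hu.1).deriv]
      have := hpos u hu
      have := Real.rpow_pos_of_pos hu.1 (c - 1)
      positivity
  have h := hmono (left_mem_Icc.2 ht.le) (right_mem_Icc.2 ht.le) ht
  simp only [Real.zero_rpow hc.ne', zero_mul] at h
  exact pos_of_mul_pos_right h (Real.rpow_nonneg ht.le c)

theorem eventually_hypergeometricLimit_neg (hc : 0 < c) {t : ℝ} (ht : 0 < t)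
    (hzero : hypergeometricLimit c (-t) = 0)
    (hpos : ∀ u ∈ Ioo 0 t, 0 < hypergeometricLimit c (-u)) :
    ∀ᶠ x in 𝓝[<] (-t), hypergeometricLimit c x < 0 := by
  have hderiv : 0 < hypergeometricLimit (c + 1) (-t) / c :=
    div_pos (hypergeometricLimit_succ_pos hc ht hpos) hc
  have hslope := ((hasDerivAt_hypergeometricLimit hc (-t)).tendsto_slope).mono_left
    (nhdsLT_le_nhdsNE _)
  filter_upwards [hslope.eventually_const_lt hderiv, self_mem_nhdsWithin] with x hx hxt
  rw [slope_def_field, hzero, sub_zero, div_eq_mul_inv] at hx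
  exact neg_of_mul_pos_left hx (inv_nonpos.2 (sub_nonpos.2 hxt.le))

theorem besselG_ofReal {ν : ℝ} (hν : -1 < ν) (t : ℝ) :
    besselG ν t =
      (hypergeometricLimit (ν + 1) (-(t ^ 2 / 4)) / Real.Gamma (ν + 1) : ℝ) := by
  rw [hypergeometricLimit, ← tsum_div_const, Complex.ofReal_tsum, besselG]
  refine tsum_congr fun k ↦ ?_
  have hG : Complex.Gamma (k + ν + 1) =
      (Real.Gamma (ν + 1) * (ascPochhammer ℝ k).eval (ν + 1) : ℝ) := by
    rw [← Gamma_add_natCast (by linarith), ← Complex.Gamma_ofReal]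
    push_cast
    ring_nf
  rw [hG, neg_eq_neg_one_mul (t ^ 2 / 4), mul_pow, pow_mul]
  push_cast
  ring

end HypergeometricLimit

/-! ### The Mehler–Heine limit -/

section MehlerHeine

open scoped Nat Topology

variable {α β : ℝ}

theorem tendsto_jacobiTaylor_term (α β : ℝ) (k : ℕ) (x : ℝ) :
    Tendsto (fun p : ℕ × ℝ ↦ jacobiTaylor α β p.1 k / k ! * (2 * p.2 / p.1 ^ 2) ^ k)
      (atTop ×ˢ 𝓝 x) (𝓝 (x ^ k / (k ! * (ascPochhammer ℝ k).eval (α + 1)))) := by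
  have hn := (tendsto_jacobiTaylor_div_pow α β k).comp (tendsto_fst (g := 𝓝 x))
  have hx := (((tendsto_snd (f := (atTop : Filter ℕ)) (g := 𝓝 x)).const_mul 2).pow k).div_const
    (k ! : ℝ)
  convert! hn.mul hx using 2
  · simp only [Function.comp_apply, div_pow, ← pow_mul]
    ring
  · rw [mul_pow]
    field_simp

theorem eventually_norm_jacobiTaylor_term_le (hα : -1 < α) (hβ : -1 < β) (x : ℝ) :
    ∀ᶠ p : ℕ × ℝ in atTop ×ˢ 𝓝 x, ∀ k,
      ‖jacobiTaylor α β p.1 k / k ! * (2 * p.2 / p.1 ^ 2) ^ k‖ ≤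
        (2 * (|x| + 1)) ^ k / (k ! * (ascPochhammer ℝ k).eval (α + 1)) := by
  have hn : ∀ᶠ n : ℕ in atTop, jacobiEigenvalue α β n ≤ 2 * n ^ 2 := by
    have h := (tendsto_jacobiEigenvalue_sub_div_sq α β 0).eventually_le_const one_lt_two
    filter_upwards [h, eventually_gt_atTop 0] with n hn hn0
    rwa [sub_zero, div_le_iff₀ (by positivity)] at hn
  have hx : ∀ᶠ u in 𝓝 x, |u| ≤ |x| + 1 :=
    continuous_abs.continuousAt.eventually_le_const (lt_add_one _)
  filter_upwards [(hn.and (eventually_gt_atTop 0)).prod_mk hx] with ⟨n, u⟩ ⟨⟨hn, hn0⟩, hu⟩ k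
  have : (0 : ℝ) < n := by exact_mod_cast hn0
  have hp := ascPochhammer_pos k (α + 1) (by linarith)
  have hd := jacobiTaylor_nonneg hα hβ n k
  have h0 := jacobiEigenvalue_nonneg hα hβ n
  calc ‖jacobiTaylor α β n k / k ! * (2 * u / n ^ 2) ^ k‖
      = jacobiTaylor α β n k / k ! * (2 * |u| / n ^ 2) ^ k := by
        simp [abs_of_nonneg hd]
    _ ≤ (2 * n ^ 2) ^ k / (2 ^ k * (ascPochhammer ℝ k).eval (α + 1)) / k ! *
          (2 * (|x| + 1) / n ^ 2) ^ k := by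
        gcongr
        exact (jacobiTaylor_le hα hβ n k).trans (by gcongr)
    _ = (2 * (|x| + 1)) ^ k / (k ! * (ascPochhammer ℝ k).eval (α + 1)) := by
        simp only [mul_pow, div_pow]
        field_simp

theorem tendsto_jacobiNormalized (hα : -1 < α) (hβ : -1 < β) (x : ℝ) :
    Tendsto (fun p : ℕ × ℝ ↦ jacobiNormalized α β p.1 (2 * p.2 / p.1 ^ 2)) (atTop ×ˢ 𝓝 x)
      (𝓝 (hypergeometricLimit (α + 1) x)) := by
  have h := tendsto_tsum_of_dominated_convergence
    (summable_hypergeometricLimit (c := α + 1) (by linarith) (2 * (|x| + 1)))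
    (tendsto_jacobiTaylor_term α β · x) (eventually_norm_jacobiTaylor_term_le hα hβ x)
  exact h.congr fun p ↦ (hasSum_jacobiNormalized hα hβ p.1 _).tsum_eq

end MehlerHeine

/-! ### Orthogonality of the Jacobi polynomials -/

section Orthogonality

open MeasureTheory Set

variable {α β : ℝ}

/-- The Jacobi weight `(1 - x) ^ α * (1 + x) ^ β` on `[-1, 1]`. -/
noncomputable def jacobiWeight (α β x : ℝ) : ℝ :=
  (1 - x) ^ α * (1 + x) ^ β

theorem intervalIntegrable_jacobiWeight (hα : -1 < α) (hβ : -1 < β) :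
    IntervalIntegrable (jacobiWeight α β) volume (-1) 1 := by
  have hleft : IntervalIntegrable (jacobiWeight α β) volume (-1) 0 := by
    have h : IntervalIntegrable (fun x : ℝ ↦ (1 + x) ^ β) volume (-1) 0 := by
      simpa using (intervalIntegral.intervalIntegrable_rpow' hβ (a := 0) (b := 1)).comp_add_left 1
    refine h.continuousOn_mul fun x hx ↦ ContinuousAt.continuousWithinAt ?_
    rw [uIcc_of_le (by norm_num)] at hx
    exact (continuousAt_const.sub continuousAt_id).rpow_const (Or.inl (by simp; linarith [hx.2]))
  have hright : IntervalIntegrable (jacobiWeight α β) volume 0 1 := by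
    have h : IntervalIntegrable (fun x : ℝ ↦ (1 - x) ^ α) volume 0 1 := by
      simpa using (intervalIntegral.intervalIntegrable_rpow' hα (a := 1) (b := 0)).comp_sub_left 1
    refine h.mul_continuousOn fun x hx ↦ ContinuousAt.continuousWithinAt ?_
    rw [uIcc_of_le (by norm_num)] at hx
    exact (continuousAt_const.add continuousAt_id).rpow_const (Or.inl (by simp; linarith [hx.1]))
  exact hleft.trans hright

theorem intervalIntegrable_eval_mul_jacobiWeight (hα : -1 < α) (hβ : -1 < β) (p : ℝ[X]) :
    IntervalIntegrable (fun x ↦ p.eval x * jacobiWeight α β x) volume (-1) 1 :=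
  (intervalIntegrable_jacobiWeight hα hβ).continuousOn_mul p.continuous.continuousOn

theorem hasDerivAt_jacobiWeight_mul_wronskian (α β : ℝ) (p q : ℝ[X]) {x : ℝ} (hx : x ∈ Ioo (-1) 1) :
    HasDerivAt
      (fun u ↦ jacobiWeight (α + 1) (β + 1) u * (derivative q * p - derivative p * q).eval u)
      ((jacobiOperator α β p * q - p * jacobiOperator α β q).eval x * jacobiWeight α β x) x := by
  have h₁ : 1 - x ≠ 0 := by linarith [hx.2]
  have h₂ : 1 + x ≠ 0 := by linarith [hx.1]
  have hweight := (((hasDerivAt_id x).const_sub 1).rpow_const (p := α + 1) (Or.inl h₁)).mul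
    (((hasDerivAt_id x).const_add 1).rpow_const (p := β + 1) (Or.inl h₂))
  refine (hweight.mul ((derivative q * p - derivative p * q).hasDerivAt x)).congr_deriv ?_
  simp only [jacobiWeight, jacobiOperator_apply, Pi.mul_apply, id, add_sub_cancel_right,
    Real.rpow_add_one h₁, Real.rpow_add_one h₂, derivative_sub, derivative_mul, eval_sub, eval_add,
    eval_mul, eval_pow, eval_X, eval_one, eval_C]
  ring

theorem integral_jacobiOperator_mul (hα : -1 < α) (hβ : -1 < β) (p q : ℝ[X]) :
    ∫ x in (-1 : ℝ)..1, (jacobiOperator α β p * q).eval x * jacobiWeight α β x =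
      ∫ x in (-1 : ℝ)..1, (p * jacobiOperator α β q).eval x * jacobiWeight α β x := by
  have hint := intervalIntegrable_eval_mul_jacobiWeight hα hβ
  have hcont : Continuous fun x ↦ jacobiWeight (α + 1) (β + 1) x *
      (derivative q * p - derivative p * q).eval x :=
    (((Real.continuous_rpow_const (by linarith)).comp (continuous_sub_left 1)).mul
      ((Real.continuous_rpow_const (by linarith)).comp (continuous_const_add 1))).mul
      (Polynomial.continuous _)
  have hFTC := intervalIntegral.integral_eq_sub_of_hasDerivAt_of_le (by norm_num)
    hcont.continuousOn (fun x hx ↦ hasDerivAt_jacobiWeight_mul_wronskian α β p q hx) (hint _)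
  have hends : jacobiWeight (α + 1) (β + 1) 1 = 0 ∧ jacobiWeight (α + 1) (β + 1) (-1) = 0 := by
    simp [jacobiWeight, Real.zero_rpow (show α + 1 ≠ 0 by linarith),
      Real.zero_rpow (show β + 1 ≠ 0 by linarith)]
  rw [hends.1, hends.2, zero_mul, zero_mul, sub_zero] at hFTC
  rw [← sub_eq_zero, ← intervalIntegral.integral_sub (hint _) (hint _), ← hFTC]
  simp only [eval_sub, sub_mul]

theorem integral_jacobiP_mul_jacobiP (hα : -1 < α) (hβ : -1 < β) {m n : ℕ} (hmn : m ≠ n) :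
    ∫ x in (-1 : ℝ)..1, (jacobiP α β m * jacobiP α β n).eval x * jacobiWeight α β x = 0 := by
  have h := integral_jacobiOperator_mul hα hβ (jacobiP α β m) (jacobiP α β n)
  simp only [jacobiOperator_jacobiP hα hβ, smul_mul_assoc, mul_smul_comm, eval_smul,
    intervalIntegral.integral_smul] at h
  by_contra h0
  exact (jacobiEigenvalue_strictMono hα hβ).injective.ne hmn (mul_right_cancel₀ h0 h)

theorem jacobiNormSq_eq (α β : ℝ) (n : ℕ) : jacobiNormSq α β n =
    ∫ x in (-1 : ℝ)..1, (jacobiP α β n * jacobiP α β n).eval x * jacobiWeight α β x := by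
  simp only [jacobiNormSq, jacobiWeight, eval_mul, sq, mul_assoc]

theorem integral_sum_jacobiP_sq (hα : -1 < α) (hβ : -1 < β) (s : Finset ℕ) (c : ℕ → ℝ) :
    ∫ x in (-1 : ℝ)..1, (∑ i ∈ s, C (c i) * jacobiP α β i).eval x ^ 2 * jacobiWeight α β x =
      ∑ i ∈ s, c i ^ 2 * jacobiNormSq α β i := by
  have hint := intervalIntegrable_eval_mul_jacobiWeight hα hβ
  have hexpand (x : ℝ) : (∑ i ∈ s, C (c i) * jacobiP α β i).eval x ^ 2 * jacobiWeight α β x =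
      ∑ i ∈ s, ∑ m ∈ s, c i * c m *
        ((jacobiP α β i * jacobiP α β m).eval x * jacobiWeight α β x) := by
    simp only [eval_finsetSum, eval_mul, eval_C, sq, Finset.sum_mul, Finset.mul_sum]
    exact Finset.sum_congr rfl fun i _ ↦ Finset.sum_congr rfl fun m _ ↦ by ring
  simp only [hexpand, ← Finset.sum_product']
  rw [intervalIntegral.integral_finsetSum fun _ _ ↦ (hint _).const_mul _, Finset.sum_product]
  refine Finset.sum_congr rfl fun i hi ↦ ?_
  rw [Finset.sum_eq_single_of_mem i hi fun m _ hm ↦ ?_]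
  · rw [intervalIntegral.integral_const_mul, jacobiNormSq_eq, sq]
  · rw [intervalIntegral.integral_const_mul, integral_jacobiP_mul_jacobiP hα hβ hm.symm, mul_zero]

end Orthogonality

/-! ### Growth of the kernel -/

section KernelGrowth

open MeasureTheory Set Asymptotics
open scoped Topology

variable {α β : ℝ}

theorem jacobiWeight_nonneg (α β : ℝ) {x : ℝ} (hx : x ∈ Icc (-1) 1) : 0 ≤ jacobiWeight α β x :=
  mul_nonneg (Real.rpow_nonneg (by linarith [hx.2]) α) (Real.rpow_nonneg (by linarith [hx.1]) β)

theorem jacobiNormSq_nonneg (α β : ℝ) (n : ℕ) : 0 ≤ jacobiNormSq α β n := by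
  rw [jacobiNormSq_eq]
  exact intervalIntegral.integral_nonneg (by norm_num) fun x hx ↦
    mul_nonneg (by simpa using mul_self_nonneg _) (jacobiWeight_nonneg α β hx)

/-- The Plancherel weight `P_n(1)² / ‖P_n‖²`: the reciprocal of the squared norm of the Jacobi
polynomial normalized to take the value `1` at `1`. -/
noncomputable def plancherelWeight (α β : ℝ) (n : ℕ) : ℝ :=
  (jacobiP α β n).eval 1 ^ 2 / jacobiNormSq α β n

theorem plancherelWeight_nonneg (α β : ℝ) (n : ℕ) : 0 ≤ plancherelWeight α β n :=
  div_nonneg (sq_nonneg _) (jacobiNormSq_nonneg α β n)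

theorem jacobiP_eval_one_add (hα : -1 < α) (hβ : -1 < β) (n : ℕ) (w : ℝ) :
    (jacobiP α β n).eval (1 + w) = (jacobiP α β n).eval 1 * jacobiNormalized α β n w :=
  (mul_div_cancel₀ _ (jacobiP_eval_one_pos hα hβ n).ne').symm

theorem kernK_one_one (hα : -1 < α) (hβ : -1 < β) (j k n : ℕ) :
    kernK α β j k n 1 1 = ∑ i ∈ Finset.range (n + 1),
      plancherelWeight α β i * jacobiTaylor α β i j * jacobiTaylor α β i k :=
  Finset.sum_congr rfl fun i _ ↦ by
    simp only [plancherelWeight, iterate_derivative_jacobiP_eval_one hα hβ]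
    ring

theorem kernKPoly_eval_one_add (hα : -1 < α) (hβ : -1 < β) (j n : ℕ) (w : ℝ) :
    (kernKPoly α β j n).eval (1 + w) = ∑ i ∈ Finset.range (n + 1),
      plancherelWeight α β i * jacobiTaylor α β i j * jacobiNormalized α β i w := by
  simp only [kernKPoly, plancherelWeight, eval_finsetSum, eval_mul, eval_C,
    jacobiP_eval_one_add hα hβ, iterate_derivative_jacobiP_eval_one hα hβ]
  exact Finset.sum_congr rfl fun i _ ↦ by ring

theorem kernK_one_one_nonneg (hα : -1 < α) (hβ : -1 < β) (j k n : ℕ) :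
    0 ≤ kernK α β j k n 1 1 := by
  rw [kernK_one_one hα hβ]
  exact Finset.sum_nonneg fun i _ ↦ mul_nonneg
    (mul_nonneg (plancherelWeight_nonneg α β i) (jacobiTaylor_nonneg hα hβ i j))
    (jacobiTaylor_nonneg hα hβ i k)

theorem abs_kernKPoly_eval_le (hα : -1 < α) (hβ : -1 < β) (j : ℕ) {m n : ℕ} (hmn : m ≤ n)
    {v w : ℝ} (hvw : |v| ≤ w) : |(kernKPoly α β j m).eval (1 + v)| ≤
      jacobiTaylor α β n j * kernK α β 0 0 m 1 1 * jacobiNormalized α β n w := by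
  rw [kernKPoly_eval_one_add hα hβ, kernK_one_one hα hβ, Finset.mul_sum, Finset.sum_mul]
  refine (Finset.abs_sum_le_sum_abs _ _).trans (Finset.sum_le_sum fun i hi ↦ ?_)
  have hin : i ≤ n := (Finset.mem_range_succ_iff.1 hi).trans hmn
  have hp := plancherelWeight_nonneg α β i
  have hd : jacobiTaylor α β i j ≤ jacobiTaylor α β n j := jacobiTaylor_mono hα hβ j hin
  have hd0 := jacobiTaylor_nonneg hα hβ
  rw [abs_mul, abs_of_nonneg (mul_nonneg hp (hd0 i j))]
  calc plancherelWeight α β i * jacobiTaylor α β i j * |jacobiNormalized α β i v|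
      ≤ plancherelWeight α β i * jacobiTaylor α β n j * jacobiNormalized α β n w :=
        mul_le_mul (mul_le_mul_of_nonneg_left hd hp) (abs_jacobiNormalized_le hα hβ hin hvw)
          (abs_nonneg _) (mul_nonneg hp (hd0 n j))
    _ = _ := by
        simp only [jacobiTaylor_zero]
        ring

theorem kernK_mul_le_kernKPoly_eval (hα : -1 < α) (hβ : -1 < β) (j n : ℕ) {v w : ℝ}
    (hvw : |v| ≤ w) :
    kernK α β j 0 n 1 1 * (2 - jacobiNormalized α β n w) ≤ (kernKPoly α β j n).eval (1 + v) := by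
  rw [kernKPoly_eval_one_add hα hβ, kernK_one_one hα hβ, Finset.sum_mul]
  refine Finset.sum_le_sum fun i hi ↦ ?_
  have hN := abs_jacobiNormalized_sub_one_le hα hβ (Finset.mem_range_succ_iff.1 hi) hvw
  rw [jacobiTaylor_zero, mul_one]
  exact mul_le_mul_of_nonneg_left (by linarith [(abs_le.1 hN).1])
    (mul_nonneg (plancherelWeight_nonneg α β i) (jacobiTaylor_nonneg hα hβ i j))

theorem integral_kernKPoly_sq (hα : -1 < α) (hβ : -1 < β) (j n : ℕ) :
    ∫ x in (-1 : ℝ)..1, (kernKPoly α β j n).eval x ^ 2 * jacobiWeight α β x =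
      kernK α β j j n 1 1 := by
  rw [kernKPoly, integral_sum_jacobiP_sq hα hβ, kernK]
  refine Finset.sum_congr rfl fun i _ ↦ ?_
  rcases eq_or_ne (jacobiNormSq α β i) 0 with h | h
  · simp [h]
  · field_simp

theorem sq_mul_integral_jacobiWeight_le (hα : -1 < α) (hβ : -1 < β) {p : ℝ[X]} {a c : ℝ}
    (ha : a ∈ Icc (-1) 1) (hc : 0 ≤ c) (hp : ∀ x ∈ Icc a 1, c ≤ p.eval x) :
    c ^ 2 * ∫ x in a..1, jacobiWeight α β x ≤
      ∫ x in (-1 : ℝ)..1, p.eval x ^ 2 * jacobiWeight α β x := by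
  have hsub : uIcc a 1 ⊆ uIcc (-1) 1 := by
    rw [uIcc_of_le ha.2, uIcc_of_le (ha.1.trans ha.2)]
    exact Icc_subset_Icc_left ha.1
  have hweight := intervalIntegrable_jacobiWeight hα hβ
  have hint : IntervalIntegrable (fun x ↦ p.eval x ^ 2 * jacobiWeight α β x) volume (-1) 1 :=
    hweight.continuousOn_mul (p.continuous.pow 2).continuousOn
  calc c ^ 2 * ∫ x in a..1, jacobiWeight α β x
      = ∫ x in a..1, c ^ 2 * jacobiWeight α β x := (intervalIntegral.integral_const_mul _ _).symm
    _ ≤ ∫ x in a..1, p.eval x ^ 2 * jacobiWeight α β x := by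
        refine intervalIntegral.integral_mono_on ha.2 ((hweight.mono_set hsub).const_mul _)
          (hint.mono_set hsub) fun x hx ↦ ?_
        have hw := jacobiWeight_nonneg α β (Icc_subset_Icc_left ha.1 hx)
        gcongr
        exact hp x hx
    _ ≤ ∫ x in (-1 : ℝ)..1, p.eval x ^ 2 * jacobiWeight α β x :=
        intervalIntegral.integral_mono_interval ha.1 ha.2 le_rfl
          ((ae_restrict_iff' measurableSet_Ioc).2 (ae_of_all _ fun x hx ↦ mul_nonneg (sq_nonneg _)
            (jacobiWeight_nonneg α β (Ioc_subset_Icc_self hx)))) hint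

-- On `[1 - δ, 1]` the kernel polynomial is at least half its value `K` at `1`, while its squared
-- norm is `K` by orthogonality: hence `(K / 2) ^ 2 * ∫ w ≤ K`.
theorem kernK_mul_integral_jacobiWeight_le (hα : -1 < α) (hβ : -1 < β) {n : ℕ} {δ : ℝ}
    (hδ : δ ∈ Icc 0 2) (hN : jacobiNormalized α β n δ ≤ 3 / 2) :
    kernK α β 0 0 n 1 1 * ∫ x in (1 - δ)..1, jacobiWeight α β x ≤ 4 := by
  set K := kernK α β 0 0 n 1 1
  have hK : 0 ≤ K := kernK_one_one_nonneg hα hβ 0 0 n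
  have hlower (x : ℝ) (hx : x ∈ Icc (1 - δ) 1) : K / 2 ≤ (kernKPoly α β 0 n).eval x := by
    have h := kernK_mul_le_kernKPoly_eval hα hβ 0 n (v := x - 1) (w := δ)
      (abs_le.2 ⟨by linarith [hx.1], by linarith [hx.2, hδ.1]⟩)
    rw [add_sub_cancel] at h
    exact le_trans (by nlinarith) h
  have hsq := (sq_mul_integral_jacobiWeight_le hα hβ ⟨by linarith [hδ.2], by linarith [hδ.1]⟩
    (by positivity) hlower).trans_eq (integral_kernKPoly_sq hα hβ 0 n)
  rcases hK.eq_or_lt with hK | hK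
  · simp [← hK]
  · exact le_of_mul_le_mul_left (by linarith) hK

theorem exists_mul_rpow_le_integral_jacobiWeight (hα : -1 < α) (hβ : -1 < β) :
    ∃ c > 0, ∀ δ ∈ Icc (0 : ℝ) 1, c * δ ^ (α + 1) ≤ ∫ x in (1 - δ)..1, jacobiWeight α β x := by
  refine ⟨min 1 (2 ^ β) / (α + 1), div_pos (by positivity) (by linarith), fun δ hδ ↦ ?_⟩
  have hsub : uIcc (1 - δ) 1 ⊆ uIcc (-1) 1 := by
    rw [uIcc_of_le (by linarith [hδ.1]), uIcc_of_le (by norm_num)]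
    exact Icc_subset_Icc_left (by linarith [hδ.2])
  have hrpow : IntervalIntegrable (fun x : ℝ ↦ (1 - x) ^ α) volume (1 - δ) 1 := by
    simpa using (intervalIntegral.intervalIntegrable_rpow' hα (a := δ) (b := 0)).comp_sub_left 1
  have hfactor (x : ℝ) (hx : x ∈ Icc (1 - δ) 1) : min 1 (2 ^ β) ≤ (1 + x) ^ β := by
    rcases le_total 0 β with h | h
    · exact (min_le_left _ _).trans (Real.one_le_rpow (by linarith [hx.1, hδ.2]) h)
    · exact (min_le_right _ _).trans
        (Real.rpow_le_rpow_of_nonpos (by linarith [hx.1, hδ.2]) (by linarith [hx.2]) h)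
  calc min 1 (2 ^ β) / (α + 1) * δ ^ (α + 1)
      = ∫ x in (1 - δ)..1, min 1 (2 ^ β) * (1 - x) ^ α := by
        rw [intervalIntegral.integral_const_mul,
          intervalIntegral.integral_comp_sub_left (fun x ↦ x ^ α) 1, sub_self, sub_sub_cancel,
          integral_rpow (Or.inl hα), Real.zero_rpow (by linarith)]
        ring
    _ ≤ ∫ x in (1 - δ)..1, jacobiWeight α β x := by
        refine intervalIntegral.integral_mono_on (by linarith [hδ.1]) (hrpow.const_mul _)
          ((intervalIntegrable_jacobiWeight hα hβ).mono_set hsub) fun x hx ↦ ?_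
        rw [mul_comm, jacobiWeight]
        exact mul_le_mul_of_nonneg_left (hfactor x hx) (Real.rpow_nonneg (by linarith [hx.2]) α)

theorem exists_eventually_jacobiNormalized_le (hα : -1 < α) (hβ : -1 < β) :
    ∃ x ∈ Ioo (0 : ℝ) (1 / 2), ∀ᶠ n : ℕ in atTop,
      jacobiNormalized α β n (2 * x / n ^ 2) ≤ 3 / 2 := by
  have h := (tendsto_jacobiNormalized hα hβ 0).eventually_le_const
    (show hypergeometricLimit (α + 1) 0 < 3 / 2 by rw [hypergeometricLimit_zero]; norm_num)
  obtain ⟨p, hp, q, hq, hpq⟩ := eventually_prod_iff.1 h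
  obtain ⟨x, hqx, hx⟩ := ((hq.filter_mono nhdsWithin_le_nhds).and
    (Ioo_mem_nhdsGT (show (0 : ℝ) < 1 / 2 by norm_num))).exists
  exact ⟨x, hx, hp.mono fun n hn ↦ hpq hn hqx⟩

theorem kernK_isBigO (hα : -1 < α) (hβ : -1 < β) :
    (fun n : ℕ ↦ kernK α β 0 0 n 1 1) =O[atTop] fun n ↦ (n : ℝ) ^ (2 * (α + 1)) := by
  obtain ⟨c, hc, hweight⟩ := exists_mul_rpow_le_integral_jacobiWeight hα hβ
  obtain ⟨x, hx, hN⟩ := exists_eventually_jacobiNormalized_le hα hβ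
  have hx0 := hx.1
  refine IsBigO.of_bound (4 / (c * (2 * x) ^ (α + 1))) ?_
  filter_upwards [hN, eventually_ge_atTop 1] with n hN hn
  have hn : (1 : ℝ) ≤ n := by exact_mod_cast hn
  have hδ : 2 * x / n ^ 2 ∈ Icc (0 : ℝ) 1 :=
    ⟨by positivity, div_le_one_of_le₀ (by nlinarith [hx.2]) (by positivity)⟩
  have hK := kernK_one_one_nonneg hα hβ 0 0 n
  have h := (mul_le_mul_of_nonneg_left (hweight _ hδ) hK).trans
    (kernK_mul_integral_jacobiWeight_le hα hβ ⟨hδ.1, hδ.2.trans one_le_two⟩ hN)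
  rw [Real.div_rpow (by positivity) (by positivity), ← Real.rpow_natCast_mul n.cast_nonneg] at h
  rw [Real.norm_of_nonneg hK, Real.norm_of_nonneg (by positivity), div_mul_eq_mul_div,
    le_div_iff₀ (by positivity)]
  rw [← mul_div_assoc, ← mul_div_assoc, div_le_iff₀ (by positivity)] at h
  exact_mod_cast h

end KernelGrowth

/-! ### The Sobolev polynomial as a perturbation of the Jacobi polynomial -/

section Perturbation

open Asymptotics
open scoped Topology

variable {α β : ℝ} {j : ℕ} {Ms : ℕ → ℝ}

/-- The ratio `Q_n(1 + w) / P_n(1)`. -/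
noncomputable def sobQNormalized (α β : ℝ) (j : ℕ) (Ms : ℕ → ℝ) (n : ℕ) (w : ℝ) : ℝ :=
  (sobQ α β j Ms n).eval (1 + w) / (jacobiP α β n).eval 1

/-- A bound for the size of `Q_n - P_n` relative to `P_n`: the mass `M_n` times
`(P_n^{(j)}(1) / P_n(1)) ^ 2 * K_{n-1}(1, 1)`. -/
noncomputable def perturbationSize (α β : ℝ) (j : ℕ) (Ms : ℕ → ℝ) (n : ℕ) : ℝ :=
  Ms n * jacobiTaylor α β n j ^ 2 * kernK α β 0 0 (n - 1) 1 1

theorem abs_sobQNormalized_sub_le (hα : -1 < α) (hβ : -1 < β) {n : ℕ} (hMs : 0 ≤ Ms n) {v w : ℝ}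
    (hvw : |v| ≤ w) : |sobQNormalized α β j Ms n v - jacobiNormalized α β n v| ≤
      perturbationSize α β j Ms n * jacobiNormalized α β n w := by
  have hP := jacobiP_eval_one_pos hα hβ n
  have hd := jacobiTaylor_nonneg hα hβ n j
  have hden : 1 ≤ 1 + Ms n * kernK α β j j (n - 1) 1 1 :=
    le_add_of_nonneg_right (mul_nonneg hMs (kernK_one_one_nonneg hα hβ j j _))
  have hcoeff : Ms n * jacobiTaylor α β n j / (1 + Ms n * kernK α β j j (n - 1) 1 1) ≤
      Ms n * jacobiTaylor α β n j := div_le_self (by positivity) hden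
  have hdiff : sobQNormalized α β j Ms n v - jacobiNormalized α β n v =
      -(Ms n * jacobiTaylor α β n j / (1 + Ms n * kernK α β j j (n - 1) 1 1) *
        (kernKPoly α β j (n - 1)).eval (1 + v)) := by
    simp only [sobQNormalized, sobQ, jacobiNormalized, eval_sub, eval_mul, eval_C,
      iterate_derivative_jacobiP_eval_one hα hβ]
    field_simp
    ring
  rw [hdiff, abs_neg, abs_mul, abs_of_nonneg (by positivity), perturbationSize]
  refine (mul_le_mul hcoeff (abs_kernKPoly_eval_le hα hβ j (n.sub_le 1) hvw) (abs_nonneg _)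
    (by positivity)).trans_eq ?_
  ring

theorem tendsto_perturbationSize (hα : -1 < α) (hβ : -1 < β)
    (hMs : Tendsto (fun n : ℕ ↦ Ms n * (n : ℝ) ^ (2 * (α + 2 * j + 1))) atTop (𝓝 0)) :
    Tendsto (perturbationSize α β j Ms) atTop (𝓝 0) := by
  have hTaylor : (fun n ↦ jacobiTaylor α β n j) =O[atTop] fun n ↦ (n : ℝ) ^ (2 * j) := by
    refine isBigO_of_div_tendsto_nhds ?_ _ (tendsto_jacobiTaylor_div_pow α β j)
    filter_upwards [eventually_gt_atTop 0] with n hn h0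
    exact absurd h0 (by positivity)
  have hK : (fun n ↦ kernK α β 0 0 (n - 1) 1 1) =O[atTop] fun n ↦ (n : ℝ) ^ (2 * (α + 1)) := by
    refine ((kernK_isBigO hα hβ).comp_tendsto (tendsto_sub_atTop_nat 1)).trans
      (IsBigO.of_norm_le fun n ↦ ?_)
    rw [Function.comp_apply, Real.norm_of_nonneg (by positivity)]
    exact Real.rpow_le_rpow (by positivity) (by exact_mod_cast n.sub_le 1) (by linarith)
  refine (((isBigO_refl Ms atTop).mul (hTaylor.pow 2)).mul hK).trans_tendsto (hMs.congr' ?_)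
  filter_upwards [eventually_gt_atTop 0] with n hn
  have hn : (0 : ℝ) < n := by exact_mod_cast hn
  rw [← pow_mul, mul_assoc, ← Real.rpow_natCast, ← Real.rpow_add hn]
  push_cast
  ring_nf

theorem eventually_sobQNormalized_pos (hα : -1 < α) (hβ : -1 < β) (hMs0 : ∀ᶠ n in atTop, 0 ≤ Ms n)
    (hMs : Tendsto (fun n : ℕ ↦ Ms n * (n : ℝ) ^ (2 * (α + 2 * j + 1))) atTop (𝓝 0)) :
    ∀ᶠ n in atTop, ∀ w, 0 ≤ w → 0 < sobQNormalized α β j Ms n w := by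
  filter_upwards [hMs0, (tendsto_perturbationSize hα hβ hMs).eventually_lt_const one_pos]
    with n hMs0 hlt w hw
  have hdiff := abs_sobQNormalized_sub_le (j := j) hα hβ hMs0 (abs_of_nonneg hw).le
  have hN := abs_jacobiNormalized_sub_one_le hα hβ (le_refl n) (abs_of_nonneg hw).le
  have hN1 : 1 ≤ jacobiNormalized α β n w := by linarith [abs_nonneg (jacobiNormalized α β n w - 1)]
  nlinarith [(abs_le.1 hdiff).1]

theorem tendsto_sobQNormalized (hα : -1 < α) (hβ : -1 < β) (hMs0 : ∀ᶠ n in atTop, 0 ≤ Ms n)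
    (hMs : Tendsto (fun n : ℕ ↦ Ms n * (n : ℝ) ^ (2 * (α + 2 * j + 1))) atTop (𝓝 0)) (x : ℝ) :
    Tendsto (fun p : ℕ × ℝ ↦ sobQNormalized α β j Ms p.1 (2 * p.2 / p.1 ^ 2)) (atTop ×ˢ 𝓝 x)
      (𝓝 (hypergeometricLimit (α + 1) x)) := by
  have habs : Tendsto (fun p : ℕ × ℝ ↦ (p.1, |p.2|)) (atTop ×ˢ 𝓝 x) (atTop ×ˢ 𝓝 |x|) :=
    tendsto_id.prodMap (continuous_abs.tendsto x)
  have hbound := ((tendsto_perturbationSize hα hβ hMs).comp (tendsto_fst (g := 𝓝 x))).mul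
    ((tendsto_jacobiNormalized hα hβ |x|).comp habs)
  rw [zero_mul] at hbound
  have hdiff : Tendsto (fun p : ℕ × ℝ ↦ sobQNormalized α β j Ms p.1 (2 * p.2 / p.1 ^ 2) -
      jacobiNormalized α β p.1 (2 * p.2 / p.1 ^ 2)) (atTop ×ˢ 𝓝 x) (𝓝 0) := by
    refine squeeze_zero_norm' ?_ hbound
    filter_upwards [tendsto_fst.eventually hMs0] with p hp
    exact abs_sobQNormalized_sub_le hα hβ hp (by simp [abs_div, abs_mul])
  simpa using hdiff.add (tendsto_jacobiNormalized hα hβ x)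

end Perturbation

/-! ### Convergence of the largest zero -/

section LargestZero

open Set
open scoped Topology

theorem tendsto_of_isGreatest_zeros {ι : Type*} {l : Filter ι} {f : ι → ℝ → ℝ} {g : ℝ → ℝ}
    {x : ι → ℝ} {x₀ b : ℝ} (hb : x₀ ≤ b) (hf : ∀ i, Continuous (f i))
    (hlim : ∀ t, Tendsto (fun p : ι × ℝ ↦ f p.1 p.2) (l ×ˢ 𝓝 t) (𝓝 (g t)))
    (hneg : ∀ᶠ t in 𝓝[<] x₀, g t < 0) (hne : ∀ t ∈ Ioc x₀ b, g t ≠ 0)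
    (hpos : ∀ᶠ i in l, ∀ t, b ≤ t → 0 < f i t)
    (hx : ∀ᶠ i in l, IsGreatest {t | f i t = 0} (x i)) : Tendsto x l (𝓝 x₀) := by
  have hlower : ∀ᶠ t in 𝓝[<] x₀, ∀ᶠ i in l, t ≤ x i := by
    filter_upwards [hneg, self_mem_nhdsWithin] with t ht htx
    have hft : Tendsto (fun i ↦ f i t) l (𝓝 (g t)) :=
      (hlim t).comp (tendsto_id.prodMk tendsto_const_nhds)
    filter_upwards [hft.eventually_lt_const ht, hpos, hx] with i hneg hpos hx
    obtain ⟨z, hz, hz0⟩ := intermediate_value_Icc (htx.le.trans hb) (hf i).continuousOn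
      ⟨hneg.le, (hpos b le_rfl).le⟩
    exact hz.1.trans (hx.2 hz0)
  have hupper : ∀ᶠ i in l, x i ≤ b := by
    filter_upwards [hpos, hx] with i hpos hx
    by_contra! h
    exact (hpos _ h.le).ne' hx.1
  obtain ⟨a, ha⟩ := hlower.exists
  refine isCompact_Icc.tendsto_nhds_of_unique_mapClusterPt
    (ha.and hupper : ∀ᶠ i in l, x i ∈ Icc a b) fun c hc hcluster ↦ ?_
  obtain ⟨u, hul, hu⟩ := mapClusterPt_iff_ultrafilter.1 hcluster
  have hgc : g c = 0 := by
    have h := (hlim c).comp ((tendsto_id'.2 hul).prodMk hu)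
    refine tendsto_nhds_unique h (tendsto_const_nhds.congr' ?_)
    filter_upwards [hx.filter_mono hul] with i hi
    exact hi.1.symm
  have hxc : x₀ ≤ c := by
    refine le_of_tendsto (tendsto_id'.2 nhdsWithin_le_nhds : Tendsto id (𝓝[<] x₀) (𝓝 x₀)) ?_
    filter_upwards [hlower] with t ht
    exact ge_of_tendsto hu (ht.filter_mono hul)
  by_contra hne'
  exact hne c ⟨hxc.lt_of_ne' hne', hc.2⟩ hgc

end LargestZero

/-! ### The scaled largest zero -/

section ScaledLargestZero

open Set
open scoped Topology

variable {α β : ℝ} {j : ℕ} {Ms : ℕ → ℝ}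

theorem tendsto_mul_rpow_of_lt {u : ℕ → ℝ} {M γ δ : ℝ} (hδ : δ < γ)
    (hu : Tendsto (fun n : ℕ ↦ u n * (n : ℝ) ^ γ) atTop (𝓝 M)) :
    Tendsto (fun n : ℕ ↦ u n * (n : ℝ) ^ δ) atTop (𝓝 0) := by
  have hpow : Tendsto (fun n : ℕ ↦ (n : ℝ) ^ (-(γ - δ))) atTop (𝓝 0) :=
    (tendsto_rpow_neg_atTop (sub_pos.2 hδ)).comp tendsto_natCast_atTop_atTop
  have h := hu.mul hpow
  rw [mul_zero] at h
  refine h.congr' ?_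
  filter_upwards [eventually_gt_atTop 0] with n hn
  rw [mul_assoc, ← Real.rpow_add (by exact_mod_cast hn)]
  ring_nf

theorem hypergeometricLimit_pos_of_besselG_ne_zero {ν s : ℝ} (hν : -1 < ν) (hs : 0 < s)
    (hsmin : ∀ t : ℝ, 0 < t → t < s → besselG ν t ≠ 0) {x : ℝ} (hx : x ∈ Ioc (-(s ^ 2 / 4)) 0) :
    0 < hypergeometricLimit (ν + 1) x := by
  by_contra! h
  obtain ⟨z, hz, hz0⟩ := intermediate_value_Icc hx.2
    (continuous_hypergeometricLimit (by linarith : 0 < ν + 1)).continuousOn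
    ⟨h, by rw [hypergeometricLimit_zero]; exact zero_le_one⟩
  have hz_neg : z < 0 := by
    refine hz.2.lt_of_ne fun h0 ↦ ?_
    rw [h0, hypergeometricLimit_zero] at hz0
    exact one_ne_zero hz0
  have hsqrt : √(-z) < s / 2 := (Real.sqrt_lt' (by positivity)).2 (by linarith [hx.1, hz.1])
  refine hsmin (2 * √(-z)) (by have := Real.sqrt_pos.2 (neg_pos.2 hz_neg); positivity)
    (by linarith) ?_
  rw [besselG_ofReal hν, mul_pow, Real.sq_sqrt (by linarith), show -(2 ^ 2 * -z / 4) = z by ring,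
    hz0, zero_div, Complex.ofReal_zero]

theorem isGreatest_zeros_sobQNormalized (hα : -1 < α) (hβ : -1 < β) {n : ℕ} (hn : 0 < n) {y : ℝ}
    (hy : IsGreatest {x | (sobQ α β j Ms n).eval x = 0} y) :
    IsGreatest {t : ℝ | sobQNormalized α β j Ms n (2 * t / n ^ 2) = 0} (n ^ 2 * (y - 1) / 2) := by
  have hP := (jacobiP_eval_one_pos hα hβ n).ne'
  have : (0 : ℝ) < n := by exact_mod_cast hn
  simp only [sobQNormalized, div_eq_zero_iff, hP, or_false]
  refine ⟨?_, fun t ht ↦ ?_⟩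
  · have h : 1 + 2 * (n ^ 2 * (y - 1) / 2) / (n : ℝ) ^ 2 = y := by field_simp; ring
    rw [mem_ofPred_eq, h]
    exact hy.1
  · have h : 2 * t / n ^ 2 ≤ y - 1 := le_sub_iff_add_le'.2 (hy.2 ht)
    rw [div_le_iff₀ (by positivity)] at h
    linarith

theorem tendsto_sq_mul_largest_zero_sub_one (hα : -1 < α) (hβ : -1 < β)
    (hMs0 : ∀ᶠ n in atTop, 0 ≤ Ms n)
    (hMs : Tendsto (fun n : ℕ ↦ Ms n * (n : ℝ) ^ (2 * (α + 2 * j + 1))) atTop (𝓝 0))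
    {s : ℝ} (hs : 0 < s) (hs0 : besselG α s = 0)
    (hsmin : ∀ t : ℝ, 0 < t → t < s → besselG α t ≠ 0) {y : ℕ → ℝ}
    (hy : ∀ᶠ n in atTop, IsGreatest {x : ℝ | (sobQ α β j Ms n).eval x = 0} (y n)) :
    Tendsto (fun n : ℕ ↦ (n : ℝ) ^ 2 * (y n - 1) / 2) atTop (𝓝 (-(s ^ 2 / 4))) := by
  have hc : 0 < α + 1 := by linarith
  have hpos : ∀ x ∈ Ioc (-(s ^ 2 / 4)) 0, 0 < hypergeometricLimit (α + 1) x :=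
    fun x hx ↦ hypergeometricLimit_pos_of_besselG_ne_zero hα hs hsmin hx
  have hzero : hypergeometricLimit (α + 1) (-(s ^ 2 / 4)) = 0 := by
    simpa [besselG_ofReal hα, -Complex.ofReal_div, (Real.Gamma_pos_of_pos hc).ne'] using hs0
  refine tendsto_of_isGreatest_zeros (f := fun n t ↦ sobQNormalized α β j Ms n (2 * t / n ^ 2))
    (b := 0) (neg_nonpos.2 (by positivity)) (fun n ↦ ?_) (tendsto_sobQNormalized hα hβ hMs0 hMs)
    (eventually_hypergeometricLimit_neg hc (by positivity) hzero fun u hu ↦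
      hpos _ ⟨neg_lt_neg hu.2, by linarith [hu.1]⟩)
    (fun x hx ↦ (hpos x hx).ne') ?_ ?_
  · exact ((sobQ α β j Ms n).continuous.comp (by fun_prop)).div_const _
  · filter_upwards [eventually_sobQNormalized_pos hα hβ hMs0 hMs] with n hn t ht
    exact hn _ (by positivity)
  · filter_upwards [hy, eventually_gt_atTop 0] with n hy hn
    exact isGreatest_zeros_sobQNormalized hα hβ hn hy

theorem sobQ_scaled_largest_zero_tendsto_general (hα : -1 < α) (hβ : -1 < β)
    (hMs0 : ∀ᶠ n in atTop, 0 ≤ Ms n)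
    (hMs : Tendsto (fun n : ℕ ↦ Ms n * (n : ℝ) ^ (2 * (α + 2 * j + 1))) atTop (𝓝 0))
    {s : ℝ} (hs : 0 < s) (hs0 : besselG α s = 0)
    (hsmin : ∀ t : ℝ, 0 < t → t < s → besselG α t ≠ 0) {y : ℕ → ℝ}
    (hy : ∀ᶠ n in atTop, IsGreatest {x : ℝ | (sobQ α β j Ms n).eval x = 0} (y n)) :
    Tendsto (fun n : ℕ ↦ (n : ℝ) * √(2 * (1 - y n))) atTop (𝓝 s) := by
  have h := ((tendsto_sq_mul_largest_zero_sub_one hα hβ hMs0 hMs hs hs0 hsmin hy).const_mul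
    (-4)).sqrt
  rw [show -4 * -(s ^ 2 / 4) = s ^ 2 by ring, Real.sqrt_sq hs.le] at h
  refine h.congr fun n ↦ ?_
  rw [show -4 * ((n : ℝ) ^ 2 * (y n - 1) / 2) = n ^ 2 * (2 * (1 - y n)) by ring,
    Real.sqrt_mul (sq_nonneg _), Real.sqrt_sq n.cast_nonneg]

end ScaledLargestZero

/-- for `γ > 2(α+2j+1)`, the scaled largest zero of `Q_n` tends to the
first positive zero of the Bessel function `J_α`. -/
theorem sobQ_scaled_largest_zero_tendsto (α β : ℝ) (hα : -1 < α) (hβ : -1 < β) (j : ℕ)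
    (hj : 1 ≤ j) (γ M : ℝ) (hM : 0 < M) (Ms : ℕ → ℝ) (hMs : ∀ n, 0 ≤ Ms n)
    (hlim : Filter.Tendsto (fun n : ℕ => Ms n * (n : ℝ) ^ γ) Filter.atTop (nhds M))
    (hγ : 2 * (α + 2 * j + 1) < γ) (s : ℝ) (hs : 0 < s)
    (hs0 : besselG α (s : ℂ) = 0)
    (hsmin : ∀ t : ℝ, 0 < t → t < s → besselG α (t : ℂ) ≠ 0)
    (y : ℕ → ℝ)
    (hy : ∀ n, 1 ≤ n → IsGreatest {x : ℝ | (sobQ α β j Ms n).eval x = 0} (y n)) :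
    Filter.Tendsto (fun n : ℕ => (n : ℝ) * Real.sqrt (2 * (1 - y n)))
      Filter.atTop (nhds s) :=
  sobQ_scaled_largest_zero_tendsto_general hα hβ (.of_forall hMs)
    (tendsto_mul_rpow_of_lt hγ hlim) hs hs0 hsmin (eventually_atTop.2 ⟨1, hy⟩)
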